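/- Growth bound for eigenfunctions of the linearized operator: let λ ∈ ℝ and let ξ: ℝⁿ → (n×n skew-symmetric real matrices)ⁿ be a smooth map satisfying −Lξ = λξ pointwise and ∫_{ℝⁿ} (‖ξ(y)‖_F² + Σ_{i,j} ‖∂_i ξ_j(y)‖_F²)·e^{−|y|²/4} dy < ∞. Then there exists a constant C (depending on ξ and λ) such that ‖ξ(y)‖_F ≤ C·(max(1, |y|))^{2λ − 1} for all y ∈ ℝⁿ. -/

import Mathlib

open scoped BigOperators

noncomputable section

/-- Euclidean space `ℝⁿ`. -/
abbrev En (n : ℕ) := EuclideanSpace ℝ (Fin n)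

/-- `n × n` real matrices, represented entrywise. -/
abbrev Mat (n : ℕ) := Fin n → Fin n → ℝ

variable {n : ℕ}

/-- Frobenius inner product `⟨A,B⟩_F = tr(AᵀB) = Σ_{μν} A_{μν} B_{μν}`. -/
def fipE (A B : Mat n) : ℝ := ∑ μ, ∑ ν, A μ ν * B μ ν

/-- Frobenius norm. -/
def fnormE (A : Mat n) : ℝ := Real.sqrt (fipE A A)

/-- Matrix commutator `[A, B] = AB − BA`, entrywise. -/
def brkt (A B : Mat n) : Mat n := fun μ ν => ∑ k, (A μ k * B k ν - B μ k * A k ν)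

/-- `A` is skew-symmetric. -/
def skewM (A : Mat n) : Prop := ∀ μ ν, A ν μ = -A μ ν

/-- Partial derivative `∂_i f` of a scalar function on `ℝⁿ`. -/
def pder (i : Fin n) (f : En n → ℝ) (y : En n) : ℝ :=
  fderiv ℝ f y (EuclideanSpace.single i 1)

/-- Euclidean Laplacian `Δf = Σ_i ∂_i ∂_i f` of a scalar function on `ℝⁿ`. -/
def lapS (f : En n → ℝ) (y : En n) : ℝ := ∑ i, pder i (fun z => pder i f z) y

/-- Componentwise partial derivative `∂_i u` of a matrix-valued function on `ℝⁿ`. -/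
def pderM (i : Fin n) (u : En n → Mat n) (y : En n) : Mat n :=
  fun μ ν => pder i (fun z => u z μ ν) y

/-- Componentwise Laplacian `Δu` of a matrix-valued function on `ℝⁿ`. -/
def lapM (u : En n → Mat n) (y : En n) : Mat n := fun μ ν => lapS (fun z => u z μ ν) y

/-- The constant `a = √(n−2)/(2√2)`. -/
def aC (n : ℕ) : ℝ := Real.sqrt ((n : ℝ) - 2) / (2 * Real.sqrt 2)

/-- The constant `b = (1/2)(6n − 12 − (n+2)√(2n−4))`. -/
def bC (n : ℕ) : ℝ := (1 / 2) * (6 * (n : ℝ) - 12 - ((n : ℝ) + 2) * Real.sqrt (2 * (n : ℝ) - 4))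

/-- `σ_i(y)`, the skew matrix with entries `(σ_i(y))^μ_ν = δ_{iν} y^μ − δ_{iμ} y^ν`. -/
def sigmaM (i : Fin n) (y : En n) : Mat n :=
  fun μ ν => (if i = ν then y μ else 0) - (if i = μ then y ν else 0)

/-- The soliton connection `W_i(y) = σ_i(y)/(a|y|² + b)`. -/
def Wc (i : Fin n) (y : En n) : Mat n :=
  fun μ ν => sigmaM i y μ ν / (aC n * ‖y‖ ^ 2 + bC n)

/-- The curvature `F_{ij} = ∂_i W_j − ∂_j W_i + [W_i, W_j]` of the soliton connection `W`. -/
def Fc (i j : Fin n) (y : En n) : Mat n :=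
  pderM i (Wc j) y - pderM j (Wc i) y + brkt (Wc i y) (Wc j y)

/-- The linearized operator `L` of the rescaled Yang–Mills de Turck flow at the soliton `W`:
`(Lu)_j = Δu_j − (1/2)Σ_i y_i ∂_i u_j − (1/2)u_j + 2Σ_i [W_i, ∂_i u_j]
  + Σ_i [W_i, [W_i, u_j]] + 2Σ_i [u_i, F_{ij}]`. -/
def Lop (u : En n → Fin n → Mat n) (y : En n) (j : Fin n) : Mat n :=
  lapM (fun z => u z j) y
    - (1 / 2 : ℝ) • (∑ i, y i • pderM i (fun z => u z j) y)
    - (1 / 2 : ℝ) • u y j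
    + (2 : ℝ) • ∑ i, brkt (Wc i y) (pderM i (fun z => u z j) y)
    + ∑ i, brkt (Wc i y) (brkt (Wc i y) (u y j))
    + (2 : ℝ) • ∑ i, brkt (u y i) (Fc i j y)

/-- Squared Frobenius norm of a tuple of matrices: `‖u‖_F² = Σ_j ‖u_j‖_F²`. -/
def tnormSq (v : Fin n → Mat n) : ℝ := ∑ j, fipE (v j) (v j)

/-- The Gaussian weight `ρ(y) = e^{−|y|²/4}`. -/
def gauss (y : En n) : ℝ := Real.exp (-‖y‖ ^ 2 / 4)

end

/-!
Let `f = |ξ|²`, `α = 2λ - 1` and `s = 1 + |y|²`. The covariant derivative `∂_i + [W_i, ·]` is metric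
for the Frobenius inner product, so `f` satisfies a Bochner formula in which `W` enters only through
the covariant derivative and the curvature. Since the curvature is `O(s⁻¹)`, the Cauchy-Schwarz
(Kato) inequality `|∇f|² ≤ 4 f |Dξ|²` turns it into
`f Δ_V f ≥ (1/2) |∇f|² - (α + C s⁻¹) f²`, where `V = -|y|²/4` and `Δ_V = Δ + ∇V · ∇`.

The barrier `e^l = s^α e^{-K/s}` satisfies the opposite inequality
`Δ_V l + (1/2) |∇l|² ≤ -α - C s⁻¹` off a compact set when `K` is large, so there the quotient
`p = f e^{-l}` satisfies `p Δ_{V+l} p ≥ (1/2) |∇p|²`. The operator `Δ_{V+l}` is symmetric with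
respect to the weight `e^{V+l}`, against which `p` has integral `∫ f e^V < ∞`. Hence Caccioppoli's
inequality, with cutoffs exhausting `ℝⁿ`, shows that `p` is bounded by its maximum on the compact
set, and `f ≤ M s^α` follows.
-/

noncomputable section

open MeasureTheory Filter Topology

variable {n : ℕ}

section PartialDerivatives

variable {i : Fin n} {f g : En n → ℝ} {y : En n}

lemma pder_const (c : ℝ) : pder i (fun _ => c) y = 0 := by
  simp [pder]

lemma pder_add (hf : DifferentiableAt ℝ f y) (hg : DifferentiableAt ℝ g y) :
    pder i (fun z => f z + g z) y = pder i f y + pder i g y := by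
  simp [pder, fderiv_fun_add hf hg]

lemma pder_mul (hf : DifferentiableAt ℝ f y) (hg : DifferentiableAt ℝ g y) :
    pder i (fun z => f z * g z) y = f y * pder i g y + g y * pder i f y := by
  simp [pder, fderiv_fun_mul hf hg]

lemma pder_sum {ι : Type*} {s : Finset ι} {f : ι → En n → ℝ}
    (hf : ∀ k ∈ s, DifferentiableAt ℝ (f k) y) :
    pder i (fun z => ∑ k ∈ s, f k z) y = ∑ k ∈ s, pder i (f k) y := by
  simp [pder, fderiv_fun_sum hf]

lemma pder_comp {φ : ℝ → ℝ} {φ' : ℝ} (hφ : HasDerivAt φ φ' (f y)) (hf : DifferentiableAt ℝ f y) :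
    pder i (fun z => φ (f z)) y = φ' * pder i f y := by
  have h : fderiv ℝ (fun z => φ (f z)) y = φ' • fderiv ℝ f y :=
    (hφ.comp_hasFDerivAt y hf.hasFDerivAt).fderiv
  simp [pder, h]

lemma pder_continuousLinearMap (L : En n →L[ℝ] ℝ) :
    pder i L y = L (EuclideanSpace.single i 1) := by
  simp [pder]

lemma pder_norm_sq : pder i (fun z : En n => ‖z‖ ^ 2) y = 2 * y i := by
  simp [pder, (hasStrictFDerivAt_norm_sq y).hasFDerivAt.fderiv, EuclideanSpace.inner_single_right]

lemma contDiff_pder {m k : WithTop ℕ∞} (hf : ContDiff ℝ k f) (hmk : m + 1 ≤ k) :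
    ContDiff ℝ m (pder i f) :=
  (hf.fderiv_right hmk).clm_apply contDiff_const

lemma differentiable_pder (hf : ContDiff ℝ 2 f) : Differentiable ℝ (pder i f) :=
  (contDiff_pder hf one_add_one_eq_two.le).differentiable one_ne_zero

lemma fderiv_eq_zero_of_pder_eq_zero (h : ∀ i, pder i f y = 0) : fderiv ℝ f y = 0 := by
  apply ContinuousLinearMap.coe_injective
  refine (EuclideanSpace.basisFun (Fin n) ℝ).toBasis.ext fun i => ?_
  simpa [pder] using h i

lemma hasCompactSupport_pder (hf : HasCompactSupport f) : HasCompactSupport (pder i f) :=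
  hf.fderiv_apply (𝕜 := ℝ) _

lemma integrable_pder (hf : ContDiff ℝ 1 f) (hc : HasCompactSupport f) : Integrable (pder i f) :=
  (contDiff_pder (m := 0) hf (by simp)).continuous.integrable_of_hasCompactSupport
    (hasCompactSupport_pder hc)

lemma integral_pder_eq_zero (hf : ContDiff ℝ 1 f) (hc : HasCompactSupport f) :
    ∫ y, pder i f y = 0 := by
  have parts := integral_mul_fderiv_eq_neg_fderiv_mul_of_integrable (μ := volume) (𝕜 := ℝ)
    (f := fun _ : En n => (1 : ℝ)) (g := f) (v := EuclideanSpace.single i 1) (by simp)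
    (by simp only [one_mul]; exact integrable_pder hf hc)
    (by simpa using hf.continuous.integrable_of_hasCompactSupport hc) (by simp)
    (fun x _ => hf.differentiable one_ne_zero x)
  simpa [pder] using parts

end PartialDerivatives

section DriftLaplacian

/-- The carré du champ `Γ(f, g) = ∇f · ∇g`. -/
def gradInner (f g : En n → ℝ) (y : En n) : ℝ := ∑ i, pder i f y * pder i g y

/-- The drift Laplacian `Δ_V f = Δf + ∇V · ∇f`. It is symmetric with respect to the measure
`e^V dy`, and `V = -|y|²/4` gives the Ornstein–Uhlenbeck operator `Δ - (1/2) y · ∇`. -/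
def driftLap (V f : En n → ℝ) (y : En n) : ℝ := lapS f y + gradInner V f y

variable {V f g h : En n → ℝ} {y : En n}

lemma gradInner_comm (f g : En n → ℝ) (y : En n) : gradInner f g y = gradInner g f y := by
  simp only [gradInner, mul_comm]

lemma gradInner_self_nonneg (f : En n → ℝ) (y : En n) : 0 ≤ gradInner f f y :=
  Finset.sum_nonneg fun _ _ => mul_self_nonneg _

lemma continuous_gradInner (hf : ContDiff ℝ 1 f) (hg : ContDiff ℝ 1 g) :
    Continuous (gradInner f g) :=
  continuous_finsetSum _ fun _ _ =>
    (contDiff_pder (m := 0) hf (by simp)).continuous.mul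
      (contDiff_pder (m := 0) hg (by simp)).continuous

lemma hasCompactSupport_gradInner (hf : HasCompactSupport f) : HasCompactSupport (gradInner f g) :=
  (hf.fderiv ℝ).mono fun y => mt fun hy => by simp [gradInner, pder, hy]

lemma gradInner_quadratic_nonneg (f g : En n → ℝ) (y : En n) (a b : ℝ) :
    0 ≤ a ^ 2 * gradInner f f y + 2 * a * b * gradInner f g y + b ^ 2 * gradInner g g y := by
  calc 0 ≤ ∑ i, (a * pder i f y + b * pder i g y) ^ 2 := Finset.sum_nonneg fun _ _ => sq_nonneg _
    _ = a ^ 2 * gradInner f f y + 2 * a * b * gradInner f g y + b ^ 2 * gradInner g g y := by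
      simp only [gradInner, Finset.mul_sum, ← Finset.sum_add_distrib]
      exact Finset.sum_congr rfl fun i _ => by ring

lemma gradInner_mul_left (hf : DifferentiableAt ℝ f y) (hg : DifferentiableAt ℝ g y) :
    gradInner (fun z => f z * g z) h y = f y * gradInner g h y + g y * gradInner f h y := by
  simp only [gradInner, pder_mul hf hg, Finset.mul_sum, ← Finset.sum_add_distrib]
  exact Finset.sum_congr rfl fun i _ => by ring

lemma gradInner_add_left (hf : DifferentiableAt ℝ f y) (hg : DifferentiableAt ℝ g y) :
    gradInner (fun z => f z + g z) h y = gradInner f h y + gradInner g h y := by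
  simp only [gradInner, pder_add hf hg, add_mul, Finset.sum_add_distrib]

lemma gradInner_comp_left {φ : ℝ → ℝ} {φ' : ℝ} (hφ : HasDerivAt φ φ' (f y))
    (hf : DifferentiableAt ℝ f y) : gradInner (fun z => φ (f z)) g y = φ' * gradInner f g y := by
  simp only [gradInner, pder_comp hφ hf, Finset.mul_sum, mul_assoc]

lemma gradInner_sum_right {ι : Type*} {s : Finset ι} {f : ι → En n → ℝ}
    (hf : ∀ k ∈ s, DifferentiableAt ℝ (f k) y) :
    gradInner V (fun z => ∑ k ∈ s, f k z) y = ∑ k ∈ s, gradInner V (f k) y := by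
  simp only [gradInner, pder_sum hf, Finset.mul_sum]
  exact Finset.sum_comm

lemma driftLap_add_left (hV : DifferentiableAt ℝ V y) (hg : DifferentiableAt ℝ g y) :
    driftLap (fun z => V z + g z) f y = driftLap V f y + gradInner g f y := by
  simp only [driftLap, gradInner_add_left hV hg, add_assoc]

lemma driftLap_mul (hf : ContDiff ℝ 2 f) (hg : ContDiff ℝ 2 g) :
    driftLap V (fun z => f z * g z) y =
      f y * driftLap V g y + g y * driftLap V f y + 2 * gradInner f g y := by
  have hfd : Differentiable ℝ f := hf.differentiable two_ne_zero
  have hgd : Differentiable ℝ g := hg.differentiable two_ne_zero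
  have second (i : Fin n) : pder i (fun z => pder i (fun w => f w * g w) z) y =
      f y * pder i (fun z => pder i g z) y + g y * pder i (fun z => pder i f z) y
        + 2 * (pder i f y * pder i g y) := by
    have first (z : En n) : pder i (fun w => f w * g w) z = f z * pder i g z + g z * pder i f z :=
      pder_mul (hfd z) (hgd z)
    have hf' : Differentiable ℝ (pder i f) := differentiable_pder hf
    have hg' : Differentiable ℝ (pder i g) := differentiable_pder hg
    simp only [first]
    rw [pder_add ((hfd y).fun_mul (hg' y)) ((hgd y).fun_mul (hf' y)), pder_mul (hfd y) (hg' y),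
      pder_mul (hgd y) (hf' y)]
    ring
  rw [driftLap, gradInner_comm, gradInner_mul_left (hfd y) (hgd y), gradInner_comm g,
    gradInner_comm f V]
  simp only [driftLap, lapS, second, Finset.sum_add_distrib, ← Finset.mul_sum, gradInner]
  ring

lemma driftLap_comp {φ φ' : ℝ → ℝ} {φ'' : ℝ} (hφ : ∀ z, HasDerivAt φ (φ' (f z)) (f z))
    (hφ' : HasDerivAt φ' φ'' (f y)) (hf : ContDiff ℝ 2 f) :
    driftLap V (fun z => φ (f z)) y = φ' (f y) * driftLap V f y + φ'' * gradInner f f y := by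
  have hfd : Differentiable ℝ f := hf.differentiable two_ne_zero
  have second (i : Fin n) : pder i (fun z => pder i (fun w => φ (f w)) z) y =
      φ' (f y) * pder i (fun z => pder i f z) y + φ'' * (pder i f y * pder i f y) := by
    simp only [pder_comp (hφ _) (hfd _)]
    rw [pder_mul (f := fun z => φ' (f z)) (hφ'.differentiableAt.comp y (hfd y))
      (differentiable_pder hf y), pder_comp hφ' (hfd y)]
    ring
  rw [driftLap, gradInner_comm, gradInner_comp_left (hφ y) (hfd y), gradInner_comm f V]
  simp only [driftLap, lapS, second, Finset.sum_add_distrib, ← Finset.mul_sum, gradInner]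
  ring

lemma driftLap_sum {ι : Type*} {s : Finset ι} {f : ι → En n → ℝ}
    (hf : ∀ k ∈ s, ContDiff ℝ 2 (f k)) :
    driftLap V (fun z => ∑ k ∈ s, f k z) y = ∑ k ∈ s, driftLap V (f k) y := by
  have hfd (z : En n) : ∀ k ∈ s, DifferentiableAt ℝ (f k) z := fun k hk =>
    (hf k hk).differentiable two_ne_zero z
  have second (i : Fin n) : pder i (fun z => pder i (fun w => ∑ k ∈ s, f k w) z) y =
      ∑ k ∈ s, pder i (fun z => pder i (f k) z) y := by
    simp only [pder_sum (hfd _)]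
    exact pder_sum fun k hk => differentiable_pder (hf k hk) y
  simp only [driftLap, gradInner_sum_right (hfd y), lapS, second, Finset.sum_add_distrib]
  rw [Finset.sum_comm]

lemma sum_pder_mul_exp_mul_pder (hV : DifferentiableAt ℝ V y) (hg : DifferentiableAt ℝ g y)
    (hf : ContDiff ℝ 2 f) :
    ∑ i, pder i (fun z => g z * (Real.exp (V z) * pder i f z)) y =
      Real.exp (V y) * (gradInner g f y + g y * driftLap V f y) := by
  have hf' (i : Fin n) : DifferentiableAt ℝ (pder i f) y := differentiable_pder hf y
  have expand (i : Fin n) : pder i (fun z => g z * (Real.exp (V z) * pder i f z)) y =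
      Real.exp (V y) * (pder i g y * pder i f y
        + g y * (pder i (fun z => pder i f z) y + pder i V y * pder i f y)) := by
    rw [pder_mul hg (hV.exp.fun_mul (hf' i)), pder_mul hV.exp (hf' i),
      pder_comp (Real.hasDerivAt_exp (V y)) hV]
    ring
  simp only [expand, driftLap, gradInner, lapS, ← Finset.mul_sum, Finset.sum_add_distrib]

lemma integrable_exp_mul_gradInner_add_mul_driftLap (hV : ContDiff ℝ 1 V) (hg : ContDiff ℝ 1 g)
    (hgc : HasCompactSupport g) (hf : ContDiff ℝ 2 f) :
    Integrable fun y => Real.exp (V y) * (gradInner g f y + g y * driftLap V f y) := by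
  simp only [← sum_pder_mul_exp_mul_pder (hV.differentiable one_ne_zero _)
    (hg.differentiable one_ne_zero _) hf]
  exact integrable_finsetSum _ fun i _ =>
    integrable_pder (hg.mul (hV.exp.mul (contDiff_pder hf one_add_one_eq_two.le))) hgc.mul_right

lemma integral_exp_mul_gradInner_add_mul_driftLap (hV : ContDiff ℝ 1 V) (hg : ContDiff ℝ 1 g)
    (hgc : HasCompactSupport g) (hf : ContDiff ℝ 2 f) :
    ∫ y, Real.exp (V y) * (gradInner g f y + g y * driftLap V f y) = 0 := by
  have hX (i : Fin n) : ContDiff ℝ 1 fun z => g z * (Real.exp (V z) * pder i f z) :=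
    hg.mul (hV.exp.mul (contDiff_pder hf one_add_one_eq_two.le))
  simp only [← sum_pder_mul_exp_mul_pder (hV.differentiable one_ne_zero _)
    (hg.differentiable one_ne_zero _) hf]
  rw [integral_finsetSum _ fun i _ => integrable_pder (hX i) hgc.mul_right]
  exact Finset.sum_eq_zero fun i _ => integral_pder_eq_zero (hX i) hgc.mul_right

end DriftLaplacian

section MaximumPrinciple

variable {V p φ : En n → ℝ} {θ : ℝ → ℝ} {M δ : ℝ}

lemma exists_cutoff (n : ℕ) : ∃ B : ℝ, ∀ R : ℝ, 0 < R → ∃ φ : En n → ℝ,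
    ContDiff ℝ 1 φ ∧ HasCompactSupport φ ∧ (∀ y ∈ Metric.ball 0 R, φ y = 1) ∧
      ∀ y, gradInner φ φ y ≤ B * R⁻¹ ^ 2 := by
  let χ : ContDiffBump (0 : En n) := ⟨1, 2, one_pos, one_lt_two⟩
  have hχ : ContDiff ℝ 1 χ := χ.contDiff
  obtain ⟨B, hB⟩ := (hasCompactSupport_gradInner χ.hasCompactSupport).exists_bound_of_continuous
    (continuous_gradInner hχ hχ)
  refine ⟨B, fun R hR => ⟨fun y => χ (R⁻¹ • y), hχ.comp (contDiff_const_smul _),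
    χ.hasCompactSupport.comp_smul (inv_ne_zero hR.ne'), fun y hy => ?_, fun y => ?_⟩⟩
  · apply χ.one_of_mem_closedBall
    rw [mem_ball_zero_iff] at hy
    rw [mem_closedBall_zero_iff, norm_smul, norm_inv, Real.norm_eq_abs, abs_of_pos hR,
      inv_mul_le_iff₀ hR]
    linarith [show χ.rIn = 1 from rfl]
  · have hp (i : Fin n) : pder i (fun z => χ (R⁻¹ • z)) y = R⁻¹ * pder i χ (R⁻¹ • y) := by
      simp [pder, fderiv_comp_smul (f := (χ : En n → ℝ)) (c := R⁻¹) (x := y)]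
    calc gradInner (fun z => χ (R⁻¹ • z)) (fun z => χ (R⁻¹ • z)) y
        = gradInner χ χ (R⁻¹ • y) * R⁻¹ ^ 2 := by
          simp only [gradInner, hp, Finset.sum_mul]
          exact Finset.sum_congr rfl fun i _ => by ring
      _ ≤ B * R⁻¹ ^ 2 :=
          mul_le_mul_of_nonneg_right ((le_abs_self _).trans (hB _)) (by positivity)

lemma eq_zero_of_setIntegral_ball_le {E : Type*} [MetricSpace E] [ProperSpace E]
    [MeasurableSpace E] [OpensMeasurableSpace E] {μ : Measure E} [μ.IsOpenPosMeasure]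
    [IsFiniteMeasureOnCompacts μ] {H : E → ℝ} (hH : Continuous H) (hH0 : ∀ y, 0 ≤ H y) {x : E}
    {A : ℝ → ℝ} (hA : Tendsto A atTop (𝓝 0))
    (hle : ∀ᶠ R in atTop, ∫ y in Metric.ball x R, H y ∂μ ≤ A R) (y : E) : H y = 0 := by
  have integrableOn (R : ℝ) : IntegrableOn H (Metric.ball x R) μ :=
    (hH.continuousOn.integrableOn_compact (isCompact_closedBall x R)).mono_set
      Metric.ball_subset_closedBall
  have integral_eq_zero (R : ℝ) : ∫ y in Metric.ball x R, H y ∂μ = 0 := by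
    refine le_antisymm (ge_of_tendsto hA ?_) (integral_nonneg hH0)
    filter_upwards [hle, eventually_ge_atTop R] with N hN hRN
    exact (setIntegral_mono_set (integrableOn N) (.of_forall hH0)
      (Metric.ball_subset_ball hRN).eventuallyLE).trans hN
  have ae_zero := (setIntegral_eq_zero_iff_of_nonneg_ae (.of_forall hH0)
    (integrableOn (dist y x + 1))).1 (integral_eq_zero (dist y x + 1))
  exact Measure.eqOn_open_of_ae_eq ae_zero Metric.isOpen_ball hH.continuousOn continuousOn_const
    (Metric.mem_ball.2 (lt_add_one _))

lemma caccioppoli_pointwise (hδ : 0 < δ) {y : En n} (hp : 0 < p y)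
    (hsub : δ * gradInner p p y ≤ p y * driftLap V p y) :
    φ y ^ 2 * (gradInner p p y / (p y + 1)) ≤
      2 / δ * (φ y ^ 2 * driftLap V p y + 2 * φ y * gradInner φ p y)
        + 4 / δ ^ 2 * (p y * gradInner φ φ y) := by
  have young := gradInner_quadratic_nonneg p φ y (δ * φ y) (2 * p y)
  rw [gradInner_comm p φ] at young
  have weighted := mul_le_mul_of_nonneg_left hsub (sq_nonneg (φ y))
  calc φ y ^ 2 * (gradInner p p y / (p y + 1)) ≤ φ y ^ 2 * (gradInner p p y / p y) := by
        have := gradInner_self_nonneg p y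
        gcongr
        linarith
    _ ≤ _ := by
        rw [← mul_div_assoc, div_le_iff₀ hp, ← sub_nonneg]
        have split : (2 / δ * (φ y ^ 2 * driftLap V p y + 2 * φ y * gradInner φ p y)
              + 4 / δ ^ 2 * (p y * gradInner φ φ y)) * p y - φ y ^ 2 * gradInner p p y =
            2 / δ * (φ y ^ 2 * (p y * driftLap V p y) - φ y ^ 2 * (δ * gradInner p p y))
              + ((δ * φ y) ^ 2 * gradInner p p y + 2 * (δ * φ y) * (2 * p y) * gradInner φ p y
                + (2 * p y) ^ 2 * gradInner φ φ y) / δ ^ 2 := by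
          field_simp
          ring
        rw [split]
        have : 0 ≤ φ y ^ 2 * (p y * driftLap V p y) - φ y ^ 2 * (δ * gradInner p p y) := by linarith
        positivity

/-- The density `e^V θ(p) |∇p|² / (|p| + 1)` controlled by the Caccioppoli inequality. The summand
`1` only serves to keep it continuous at the zeros of `p`. -/
def energyDensity (V : En n → ℝ) (θ : ℝ → ℝ) (p : En n → ℝ) (y : En n) : ℝ :=
  Real.exp (V y) * θ (p y) * (gradInner p p y / (|p y| + 1))

lemma continuous_energyDensity (hV : Continuous V) (hθ : Continuous θ) (hp : ContDiff ℝ 1 p) :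
    Continuous (energyDensity V θ p) :=
  (hV.rexp.mul (hθ.comp hp.continuous)).mul <| (continuous_gradInner hp hp).div
    (hp.continuous.abs.add continuous_const) fun _ => by positivity

lemma energyDensity_nonneg (hθ : ∀ t, 0 ≤ θ t) (y : En n) : 0 ≤ energyDensity V θ p y :=
  mul_nonneg (mul_nonneg (Real.exp_pos _).le (hθ _))
    (div_nonneg (gradInner_self_nonneg p y) (by positivity))

lemma sq_mul_energyDensity_le (hδ : 0 < δ) (hM : 0 ≤ M) (hp : ContDiff ℝ 2 p)
    (hsub : ∀ y, M < p y → δ * gradInner p p y ≤ p y * driftLap V p y)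
    (hθ : Differentiable ℝ θ) (hmono : Monotone θ) (hθ0 : ∀ t ≤ M, θ t = 0) (hθ1 : ∀ t, θ t ≤ 1)
    (hφ : Differentiable ℝ φ) (y : En n) :
    φ y ^ 2 * energyDensity V θ p y ≤
      2 / δ * (Real.exp (V y) * (gradInner (fun z => φ z ^ 2 * θ (p z)) p y
        + φ y ^ 2 * θ (p y) * driftLap V p y))
      + 4 / δ ^ 2 * gradInner φ φ y * (|p y| * Real.exp (V y)) := by
  have hpd : DifferentiableAt ℝ p y := hp.differentiable two_ne_zero y
  have grad : gradInner (fun z => φ z ^ 2 * θ (p z)) p y =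
      φ y ^ 2 * (deriv θ (p y) * gradInner p p y) + θ (p y) * (2 * φ y * gradInner φ p y) := by
    rw [gradInner_mul_left (g := fun z => θ (p z)) ((hφ y).fun_pow 2) ((hθ _).comp y hpd),
      gradInner_comp_left (hθ _).hasDerivAt hpd,
      gradInner_comp_left (φ := fun t => t ^ 2) (by simpa using hasDerivAt_pow 2 (φ y)) (hφ y)]
  have monotone_term : 0 ≤ φ y ^ 2 * (deriv θ (p y) * gradInner p p y) :=
    mul_nonneg (sq_nonneg _) (mul_nonneg hmono.deriv_nonneg (gradInner_self_nonneg p y))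
  have hφφ := gradInner_self_nonneg φ y
  rw [grad, energyDensity]
  rcases le_or_gt (p y) M with hpM | hpM
  · rw [hθ0 _ hpM]
    simp only [mul_zero, zero_mul, add_zero]
    positivity
  · have hp0 : 0 < p y := hM.trans_lt hpM
    have hθp : 0 ≤ θ (p y) := (hθ0 M le_rfl).symm.trans_le (hmono hpM.le)
    rw [abs_of_pos hp0]
    calc φ y ^ 2 * (Real.exp (V y) * θ (p y) * (gradInner p p y / (p y + 1)))
        = Real.exp (V y) * θ (p y) * (φ y ^ 2 * (gradInner p p y / (p y + 1))) := by ring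
      _ ≤ Real.exp (V y) * θ (p y) * (2 / δ * (φ y ^ 2 * driftLap V p y
            + 2 * φ y * gradInner φ p y) + 4 / δ ^ 2 * (p y * gradInner φ φ y)) := by
          gcongr
          exact caccioppoli_pointwise hδ hp0 (hsub y hpM)
      _ = 2 / δ * (Real.exp (V y) * (θ (p y) * (2 * φ y * gradInner φ p y)
            + φ y ^ 2 * θ (p y) * driftLap V p y))
          + θ (p y) * (4 / δ ^ 2 * gradInner φ φ y * (p y * Real.exp (V y))) := by ring
      _ ≤ _ := by
          refine add_le_add ?_ (mul_le_of_le_one_left (by positivity) (hθ1 _))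
          gcongr
          exact le_add_of_nonneg_left monotone_term

lemma integral_sq_mul_energyDensity_le (hδ : 0 < δ) (hM : 0 ≤ M) (hV : ContDiff ℝ 1 V)
    (hp : ContDiff ℝ 2 p) (hI : Integrable fun y => p y * Real.exp (V y))
    (hsub : ∀ y, M < p y → δ * gradInner p p y ≤ p y * driftLap V p y)
    (hθ : ContDiff ℝ 1 θ) (hmono : Monotone θ) (hθ0 : ∀ t ≤ M, θ t = 0) (hθ1 : ∀ t, θ t ≤ 1)
    (hφ : ContDiff ℝ 1 φ) (hφc : HasCompactSupport φ) {b : ℝ} (hb : ∀ y, gradInner φ φ y ≤ b) :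
    ∫ y, φ y ^ 2 * energyDensity V θ p y ≤ 4 / δ ^ 2 * b * ∫ y, |p y| * Real.exp (V y) := by
  have hp1 : ContDiff ℝ 1 p := hp.of_le one_le_two
  have hg : ContDiff ℝ 1 fun z => φ z ^ 2 * θ (p z) := (hφ.pow 2).mul (hθ.comp hp1)
  have hφ2c : HasCompactSupport fun z => φ z ^ 2 := hφc.comp_left (zero_pow two_ne_zero)
  have integrable_left : Integrable fun y => φ y ^ 2 * energyDensity V θ p y :=
    ((hφ.continuous.pow 2).mul (continuous_energyDensity hV.continuous hθ.continuous hp1))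
      |>.integrable_of_hasCompactSupport hφ2c.mul_right
  have integrable_abs : Integrable fun y => |p y| * Real.exp (V y) := by
    simpa only [Real.norm_eq_abs, abs_mul, Real.abs_exp] using hI.norm
  have integrable_green := integrable_exp_mul_gradInner_add_mul_driftLap hV hg hφ2c.mul_right hp
  calc ∫ y, φ y ^ 2 * energyDensity V θ p y
      ≤ ∫ y, (2 / δ * (Real.exp (V y) * (gradInner (fun z => φ z ^ 2 * θ (p z)) p y
          + φ y ^ 2 * θ (p y) * driftLap V p y)) + 4 / δ ^ 2 * b * (|p y| * Real.exp (V y))) := by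
        refine integral_mono integrable_left
          ((integrable_green.const_mul _).add (integrable_abs.const_mul _)) fun y => ?_
        refine (sq_mul_energyDensity_le hδ hM hp hsub (hθ.differentiable one_ne_zero) hmono hθ0 hθ1
          (hφ.differentiable one_ne_zero) y).trans ?_
        gcongr
        exact hb y
    _ = 4 / δ ^ 2 * b * ∫ y, |p y| * Real.exp (V y) := by
        rw [integral_add (integrable_green.const_mul _) (integrable_abs.const_mul _),
          integral_const_mul, integral_const_mul,
          integral_exp_mul_gradInner_add_mul_driftLap hV hg hφ2c.mul_right hp, mul_zero, zero_add]

lemma energyDensity_eq_zero (hδ : 0 < δ) (hM : 0 ≤ M) (hV : ContDiff ℝ 1 V)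
    (hp : ContDiff ℝ 2 p) (hI : Integrable fun y => p y * Real.exp (V y))
    (hsub : ∀ y, M < p y → δ * gradInner p p y ≤ p y * driftLap V p y)
    (hθ : ContDiff ℝ 1 θ) (hmono : Monotone θ) (hθ0 : ∀ t ≤ M, θ t = 0) (hθ1 : ∀ t, θ t ≤ 1)
    (y : En n) : energyDensity V θ p y = 0 := by
  obtain ⟨B, hB⟩ := exists_cutoff n
  have hcont : Continuous (energyDensity V θ p) :=
    continuous_energyDensity hV.continuous hθ.continuous (hp.of_le one_le_two)
  have hθ_nonneg (t : ℝ) : 0 ≤ θ t :=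
    (hθ0 _ (min_le_right t M)).symm.trans_le (hmono (min_le_left t M))
  have hnonneg : ∀ y, 0 ≤ energyDensity V θ p y := energyDensity_nonneg hθ_nonneg
  have hlim : Tendsto (fun R : ℝ => 4 / δ ^ 2 * (B * R⁻¹ ^ 2) * ∫ y, |p y| * Real.exp (V y))
      atTop (𝓝 0) := by
    simpa using (((tendsto_inv_atTop_zero.pow 2).const_mul B).const_mul (4 / δ ^ 2)).mul_const
      (∫ y, |p y| * Real.exp (V y))
  refine eq_zero_of_setIntegral_ball_le (μ := volume) (x := 0) hcont hnonneg hlim ?_ y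
  filter_upwards [eventually_gt_atTop 0] with R hR
  obtain ⟨φ, hφ, hφc, hφ1, hφB⟩ := hB R hR
  calc ∫ y in Metric.ball 0 R, energyDensity V θ p y
      = ∫ y in Metric.ball 0 R, φ y ^ 2 * energyDensity V θ p y :=
        setIntegral_congr_fun measurableSet_ball fun y hy => by simp [hφ1 y hy]
    _ ≤ ∫ y, φ y ^ 2 * energyDensity V θ p y :=
        setIntegral_le_integral
          (((hφ.continuous.pow 2).mul hcont).integrable_of_hasCompactSupport
            (hφc.comp_left (g := fun t => t ^ 2) (zero_pow two_ne_zero)).mul_right)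
          (.of_forall fun y => mul_nonneg (sq_nonneg _) (hnonneg y))
    _ ≤ _ := integral_sq_mul_energyDensity_le hδ hM hV hp hI hsub hθ hmono hθ0 hθ1 hφ hφc hφB

/-- Caccioppoli's inequality with larger and larger cutoffs shows that `∇p = 0` on `{p > M}`, so a
smooth step function of `p - M` has zero gradient and vanishes identically. -/
theorem le_of_le_mul_driftLap (hδ : 0 < δ) (hM : 0 ≤ M) (hV : ContDiff ℝ 1 V)
    (hp : ContDiff ℝ 2 p) (hI : Integrable fun y => p y * Real.exp (V y))
    (hsub : ∀ y, M < p y → δ * gradInner p p y ≤ p y * driftLap V p y)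
    {y₀ : En n} (hy₀ : p y₀ ≤ M) (y : En n) : p y ≤ M := by
  set θ : ℝ → ℝ := fun t => Real.smoothTransition (t - M) with hθ_def
  have hθ : ContDiff ℝ 1 θ := Real.smoothTransition.contDiff.comp (contDiff_id.sub contDiff_const)
  have hmono : Monotone θ := fun s t hst =>
    Real.smoothTransition.monotone (sub_le_sub_right hst M)
  have hθ_zero (t : ℝ) : θ t = 0 ↔ t ≤ M := by
    rw [hθ_def, Real.smoothTransition.zero_iff_nonpos, sub_nonpos]
  have hθ_nonneg (t : ℝ) : 0 ≤ θ t := Real.smoothTransition.nonneg _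
  have hpd : Differentiable ℝ p := hp.differentiable two_ne_zero
  have hθd : Differentiable ℝ θ := hθ.differentiable one_ne_zero
  have pder_eq_zero (z : En n) (i : Fin n) : pder i (fun w => θ (p w)) z = 0 := by
    rw [pder_comp (hθd _).hasDerivAt (hpd z)]
    rcases le_or_gt (p z) M with hz | hz
    · have hmin : IsLocalMin θ (p z) :=
        .of_forall fun t => ((hθ_zero _).2 hz).trans_le (hθ_nonneg t)
      rw [hmin.deriv_eq_zero, zero_mul]
    · have hzero := energyDensity_eq_zero hδ hM hV hp hI hsub hθ hmono
        (fun t => (hθ_zero t).2) (fun t => Real.smoothTransition.le_one _) z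
      have hgrad : gradInner p p z = 0 := by
        have : |p z| + 1 ≠ 0 := by positivity
        simpa [energyDensity, hθ_zero, not_le.2 hz, this] using hzero
      have hi := (Finset.sum_eq_zero_iff_of_nonneg fun _ _ => mul_self_nonneg _).1 hgrad i
        (Finset.mem_univ i)
      rw [mul_self_eq_zero.1 hi, mul_zero]
  have hconst := is_const_of_fderiv_eq_zero (𝕜 := ℝ) (hθd.comp hpd)
    (fun z => fderiv_eq_zero_of_pder_eq_zero (pder_eq_zero z)) y y₀
  exact (hθ_zero _).1 (hconst.trans ((hθ_zero _).2 hy₀))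

end MaximumPrinciple

section Barrier

variable {V f l : En n → ℝ} {y : En n} {α C K : ℝ}

/-- The potential `-|y|²/4`, whose exponential is the Gaussian weight `gauss`. -/
def gaussPot (y : En n) : ℝ := -‖y‖ ^ 2 / 4

lemma contDiff_gaussPot {k : WithTop ℕ∞} : ContDiff ℝ k (gaussPot : En n → ℝ) :=
  (contDiff_norm_sq ℝ).neg.div_const 4

lemma pder_gaussPot (i : Fin n) : pder i gaussPot y = -(1 / 2) * y i := by
  have hd : DifferentiableAt ℝ (fun z : En n => ‖z‖ ^ 2) y :=
    (contDiff_norm_sq ℝ (n := 1)).differentiable one_ne_zero y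
  have h := pder_comp (i := i) (φ := fun t => -t / 4) ((hasDerivAt_id _).neg.div_const 4) hd
  rw [pder_norm_sq] at h
  calc pder i gaussPot y = -1 / 4 * (2 * y i) := h
    _ = -(1 / 2) * y i := by ring

lemma driftLap_gaussPot (f : En n → ℝ) (y : En n) :
    driftLap gaussPot f y = lapS f y - 1 / 2 * ∑ i, y i * pder i f y := by
  simp only [driftLap, gradInner, pder_gaussPot, mul_assoc, ← Finset.mul_sum]
  ring

lemma contDiff_one_add_norm_sq {k : WithTop ℕ∞} : ContDiff ℝ k fun z : En n => 1 + ‖z‖ ^ 2 :=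
  contDiff_const.add (contDiff_norm_sq ℝ)

lemma pder_one_add_norm_sq (i : Fin n) : pder i (fun z : En n => 1 + ‖z‖ ^ 2) y = 2 * y i := by
  rw [pder_add (differentiableAt_const _) ((contDiff_norm_sq ℝ (n := 1)).differentiable
    one_ne_zero y), pder_const, pder_norm_sq, zero_add]

lemma gradInner_one_add_norm_sq :
    gradInner (fun z : En n => 1 + ‖z‖ ^ 2) (fun z => 1 + ‖z‖ ^ 2) y = 4 * ‖y‖ ^ 2 := by
  simp only [gradInner, pder_one_add_norm_sq]
  rw [EuclideanSpace.real_norm_sq_eq y, Finset.mul_sum]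
  exact Finset.sum_congr rfl fun i _ => by ring

lemma driftLap_gaussPot_one_add_norm_sq :
    driftLap gaussPot (fun z : En n => 1 + ‖z‖ ^ 2) y = 2 * n - ‖y‖ ^ 2 := by
  have second (i : Fin n) : pder i (fun z : En n => 2 * z i) y = 2 :=
    (pder_continuousLinearMap ((2 : ℝ) • EuclideanSpace.proj (𝕜 := ℝ) i)).trans (by simp)
  simp only [driftLap_gaussPot, lapS, pder_one_add_norm_sq, second, Finset.sum_const,
    Finset.card_univ, Fintype.card_fin, nsmul_eq_mul]
  rw [EuclideanSpace.real_norm_sq_eq y, Finset.mul_sum, mul_comm]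
  congr 1
  exact Finset.sum_congr rfl fun i _ => by ring

/-- The logarithm of the barrier `s^α e^{-K/s}`, where `s = 1 + |y|²`. The factor `e^{-K/s}` tends
to `1` at infinity and absorbs the lower order terms of the differential inequality. -/
def logBarrier (α K : ℝ) (y : En n) : ℝ :=
  α * Real.log (1 + ‖y‖ ^ 2) - K * (1 + ‖y‖ ^ 2)⁻¹

lemma hasDerivAt_mul_log_sub_mul_inv {s : ℝ} (hs : s ≠ 0) :
    HasDerivAt (fun s => α * Real.log s - K * s⁻¹) (α * s⁻¹ + K * s⁻¹ ^ 2) s :=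
  (((Real.hasDerivAt_log hs).const_mul α).fun_sub ((hasDerivAt_inv hs).const_mul K)).congr_deriv
    (by rw [inv_pow]; ring)

lemma hasDerivAt_mul_inv_add_mul_inv_sq {s : ℝ} (hs : s ≠ 0) :
    HasDerivAt (fun s => α * s⁻¹ + K * s⁻¹ ^ 2) (-(α * s⁻¹ ^ 2 + 2 * K * s⁻¹ ^ 3)) s :=
  (((hasDerivAt_inv hs).const_mul α).fun_add
    (((hasDerivAt_inv hs).fun_pow 2).const_mul K)).congr_deriv
    (by simp only [Nat.cast_ofNat, Nat.add_one_sub_one, pow_one, ← inv_pow]; ring)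

lemma contDiff_logBarrier {k : WithTop ℕ∞} : ContDiff ℝ k (logBarrier α K : En n → ℝ) := by
  have hs (z : En n) : 1 + ‖z‖ ^ 2 ≠ 0 := by positivity
  exact (contDiff_const.mul (contDiff_one_add_norm_sq.log hs)).sub
    (contDiff_const.mul (contDiff_one_add_norm_sq.inv hs))

lemma gradInner_logBarrier_left (g : En n → ℝ) (y : En n) :
    gradInner (logBarrier α K) g y =
      (α * (1 + ‖y‖ ^ 2)⁻¹ + K * (1 + ‖y‖ ^ 2)⁻¹ ^ 2) * gradInner (fun z => 1 + ‖z‖ ^ 2) g y :=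
  gradInner_comp_left (φ := fun s => α * Real.log s - K * s⁻¹)
    (hasDerivAt_mul_log_sub_mul_inv (by positivity))
    ((contDiff_one_add_norm_sq (k := 1)).differentiable one_ne_zero y)

lemma driftLap_logBarrier (y : En n) :
    driftLap gaussPot (logBarrier α K) y =
      (α * (1 + ‖y‖ ^ 2)⁻¹ + K * (1 + ‖y‖ ^ 2)⁻¹ ^ 2) * (2 * n - ‖y‖ ^ 2)
        - (α * (1 + ‖y‖ ^ 2)⁻¹ ^ 2 + 2 * K * (1 + ‖y‖ ^ 2)⁻¹ ^ 3) * (4 * ‖y‖ ^ 2) := by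
  have hs (z : En n) : 1 + ‖z‖ ^ 2 ≠ 0 := by positivity
  have h := driftLap_comp (V := gaussPot) (f := fun z : En n => 1 + ‖z‖ ^ 2)
    (fun z => hasDerivAt_mul_log_sub_mul_inv (α := α) (K := K) (hs z))
    (hasDerivAt_mul_inv_add_mul_inv_sq (hs y)) contDiff_one_add_norm_sq
  rw [driftLap_gaussPot_one_add_norm_sq, gradInner_one_add_norm_sq, neg_mul, ← sub_eq_add_neg] at h
  exact h

lemma exp_logBarrier_le (α K : ℝ) (y : En n) :
    Real.exp (logBarrier α K y) ≤ Real.exp |K| * (1 + ‖y‖ ^ 2) ^ α := by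
  have hs : 0 < 1 + ‖y‖ ^ 2 := by positivity
  have hinv : (1 + ‖y‖ ^ 2)⁻¹ ≤ 1 := inv_le_one_of_one_le₀ (by linarith [sq_nonneg ‖y‖])
  have hK : -(K * (1 + ‖y‖ ^ 2)⁻¹) ≤ |K| := by
    calc -(K * (1 + ‖y‖ ^ 2)⁻¹) ≤ |K * (1 + ‖y‖ ^ 2)⁻¹| := neg_le_abs _
      _ = |K| * (1 + ‖y‖ ^ 2)⁻¹ := by rw [abs_mul, abs_of_pos (inv_pos.2 hs)]
      _ ≤ |K| := mul_le_of_le_one_right (abs_nonneg K) hinv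
  rw [Real.rpow_def_of_pos hs, ← Real.exp_add, Real.exp_le_exp, logBarrier]
  linarith

lemma exists_eventually_radial_le (α C N : ℝ) : ∃ K, ∀ᶠ s : ℝ in atTop,
    (α * s⁻¹ + K * s⁻¹ ^ 2) * (2 * N - (s - 1))
      - (α * s⁻¹ ^ 2 + 2 * K * s⁻¹ ^ 3) * (4 * (s - 1))
      + 1 / 2 * ((α * s⁻¹ + K * s⁻¹ ^ 2) ^ 2 * (4 * (s - 1))) ≤ -α - C * s⁻¹ := by
  -- With this `K` the difference of the two sides is `s⁻¹ q(s⁻¹) = -s⁻¹ + O(s⁻²)`.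
  set K := 2 * N * α - 3 * α + 2 * α ^ 2 + C + 1 with hK
  let q : ℝ → ℝ := fun t => -1 + t * ((2 * N * K + 4 * α - 7 * K + 4 * α * K - 2 * α ^ 2)
    + (8 * K + 2 * K ^ 2 - 4 * α * K) * t - 2 * K ^ 2 * t ^ 2)
  have hq : Tendsto (fun s : ℝ => q s⁻¹) atTop (𝓝 (-1)) := by
    have h0 : q 0 = -1 := by simp [q]
    rw [← h0]
    exact (Continuous.tendsto (by fun_prop) 0).comp tendsto_inv_atTop_zero
  refine ⟨K, ?_⟩
  filter_upwards [hq.eventually_lt_const neg_one_lt_zero, eventually_gt_atTop 0] with s hqs hs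
  have hts : s⁻¹ * q s⁻¹ ≤ 0 := mul_nonpos_of_nonneg_of_nonpos (inv_pos.2 hs).le hqs.le
  refine sub_nonpos.1 (le_of_eq_of_le ?_ hts)
  simp only [q]
  field_simp
  rw [hK]
  ring

lemma exists_driftLap_logBarrier_le (n : ℕ) (α C : ℝ) : ∃ K S, ∀ y : En n, S ≤ 1 + ‖y‖ ^ 2 →
    driftLap gaussPot (logBarrier α K) y
      + 1 / 2 * gradInner (logBarrier α K) (logBarrier α K) y ≤ -α - C * (1 + ‖y‖ ^ 2)⁻¹ := by
  obtain ⟨K, hK⟩ := exists_eventually_radial_le α C n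
  obtain ⟨S, hS⟩ := eventually_atTop.1 hK
  refine ⟨K, S, fun y hy => ?_⟩
  rw [driftLap_logBarrier, gradInner_logBarrier_left, gradInner_comm, gradInner_logBarrier_left,
    gradInner_one_add_norm_sq]
  convert hS _ hy using 1
  ring

lemma mul_driftLap_mul_exp_neg (hV : DifferentiableAt ℝ V y) (hf : ContDiff ℝ 2 f)
    (hl : ContDiff ℝ 2 l) :
    let p := fun z => f z * Real.exp (-l z)
    p y * driftLap (fun z => V z + l z) p y - 1 / 2 * gradInner p p y =
      Real.exp (-l y) ^ 2 * (f y * driftLap V f y - 1 / 2 * gradInner f f y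
        - f y ^ 2 * (driftLap V l y + 1 / 2 * gradInner l l y)) := by
  intro p
  have hfd : DifferentiableAt ℝ f y := hf.differentiable two_ne_zero y
  have hld : DifferentiableAt ℝ l y := hl.differentiable two_ne_zero y
  have hexp (t : ℝ) : HasDerivAt (fun t => Real.exp (-t)) (-Real.exp (-t)) t := by
    simpa using (hasDerivAt_neg t).exp
  have hexp' (t : ℝ) : HasDerivAt (fun t => -Real.exp (-t)) (Real.exp (-t)) t := by
    simpa using (hexp t).fun_neg
  have hed : DifferentiableAt ℝ (fun z => Real.exp (-l z)) y := hld.neg.exp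
  have grad_exp (g : En n → ℝ) :
      gradInner (fun z => Real.exp (-l z)) g y = -Real.exp (-l y) * gradInner l g y :=
    gradInner_comp_left (hexp (l y)) hld
  have grad (g : En n → ℝ) :
      gradInner p g y = Real.exp (-l y) * (gradInner f g y - f y * gradInner l g y) := by
    rw [gradInner_mul_left hfd hed, grad_exp]
    ring
  have lap : driftLap V p y = Real.exp (-l y) * (driftLap V f y - 2 * gradInner f l y
      - f y * driftLap V l y + f y * gradInner l l y) := by
    rw [driftLap_mul hf hl.neg.exp, gradInner_comm, grad_exp,
      driftLap_comp (fun z => hexp (l z)) (hexp' (l y)) hl, gradInner_comm l f]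
    ring
  have hp : p y = f y * Real.exp (-l y) := rfl
  rw [driftLap_add_left hV hld, lap, gradInner_comm l p, grad, grad p, gradInner_comm f p, grad f,
    gradInner_comm l p, grad l, gradInner_comm l f, hp]
  ring

theorem exists_le_mul_one_add_norm_sq_rpow (hf : ContDiff ℝ 2 f)
    (hint : Integrable fun y => f y * gauss y)
    (hsub : ∀ y, 1 / 2 * gradInner f f y - (α + C * (1 + ‖y‖ ^ 2)⁻¹) * f y ^ 2 ≤
      f y * driftLap gaussPot f y) :
    ∃ M, 0 ≤ M ∧ ∀ y, f y ≤ M * (1 + ‖y‖ ^ 2) ^ α := by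
  obtain ⟨K, S, hKS⟩ := exists_driftLap_logBarrier_le n α C
  set l : En n → ℝ := logBarrier α K
  set p : En n → ℝ := fun z => f z * Real.exp (-l z)
  have hl {k : WithTop ℕ∞} : ContDiff ℝ k l := contDiff_logBarrier
  have hp : ContDiff ℝ 2 p := hf.mul hl.neg.exp
  have f_eq (y : En n) : f y = p y * Real.exp (l y) := by
    simp only [p, mul_assoc, ← Real.exp_add, neg_add_cancel, Real.exp_zero, mul_one]
  obtain ⟨M₀, hM₀⟩ :=
    (isCompact_closedBall (0 : En n) |S|).bddAbove_image hp.continuous.continuousOn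
  have bound_ball (y : En n) (hy : ‖y‖ ≤ |S|) : p y ≤ max M₀ 0 :=
    (hM₀ ⟨y, mem_closedBall_zero_iff.2 hy, rfl⟩).trans (le_max_left _ _)
  have outside (y : En n) (hy : max M₀ 0 < p y) : S ≤ 1 + ‖y‖ ^ 2 := by
    have : |S| < ‖y‖ := not_le.1 fun h => hy.not_ge (bound_ball y h)
    nlinarith [le_abs_self S, sq_nonneg (‖y‖ - 1)]
  have hI : Integrable fun y => p y * Real.exp (gaussPot y + l y) := by
    refine hint.congr (.of_forall fun y => ?_)
    simp only [f_eq y, Real.exp_add, gauss, gaussPot]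
    ring
  have hsub' (y : En n) (hy : max M₀ 0 < p y) :
      1 / 2 * gradInner p p y ≤ p y * driftLap (fun z => gaussPot z + l z) p y := by
    have := mul_le_mul_of_nonneg_left (hKS y (outside y hy)) (sq_nonneg (f y))
    rw [← sub_nonneg,
      mul_driftLap_mul_exp_neg (contDiff_gaussPot.differentiable one_ne_zero y) hf hl]
    exact mul_nonneg (sq_nonneg _) (by linarith [hsub y])
  have hpM (y : En n) : p y ≤ max M₀ 0 :=
    le_of_le_mul_driftLap one_half_pos (le_max_right _ _) (contDiff_gaussPot.add hl) hp hI hsub'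
      (bound_ball 0 (by simp)) y
  refine ⟨max M₀ 0 * Real.exp |K|, by positivity, fun y => ?_⟩
  calc f y = p y * Real.exp (l y) := f_eq y
    _ ≤ max M₀ 0 * (Real.exp |K| * (1 + ‖y‖ ^ 2) ^ α) := by
        gcongr
        · exact hpM y
        · exact exp_logBarrier_le α K y
    _ = max M₀ 0 * Real.exp |K| * (1 + ‖y‖ ^ 2) ^ α := by ring

end Barrier

section Matrices

variable {A B W : Mat n} {u : Fin n → Mat n} {a b K : ℝ}

lemma fipE_eq_trace (A B : Mat n) :
    fipE A B = ((Matrix.of A).transpose * Matrix.of B).trace := by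
  simp only [fipE, Matrix.trace, Matrix.diag_apply, Matrix.mul_apply, Matrix.transpose_apply,
    Matrix.of_apply]
  exact Finset.sum_comm

lemma of_brkt (A B : Mat n) :
    Matrix.of (brkt A B) = Matrix.of A * Matrix.of B - Matrix.of B * Matrix.of A := by
  ext μ ν
  simp [brkt, Matrix.mul_apply]

lemma fipE_add_left (A B C : Mat n) : fipE (A + B) C = fipE A C + fipE B C := by
  simp [fipE, add_mul, Finset.sum_add_distrib]

lemma fipE_smul_left (c : ℝ) (A C : Mat n) : fipE (c • A) C = c * fipE A C := by
  simp [fipE, Finset.mul_sum, mul_assoc]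

lemma fipE_sub_left (A B C : Mat n) : fipE (A - B) C = fipE A C - fipE B C := by
  simp [fipE, sub_mul]

lemma fipE_sum_left {ι : Type*} (s : Finset ι) (A : ι → Mat n) (C : Mat n) :
    fipE (∑ i ∈ s, A i) C = ∑ i ∈ s, fipE (A i) C :=
  map_sum (AddMonoidHom.mk' (fun A => fipE A C) fun A B => fipE_add_left A B C) A s

lemma fipE_comm (A B : Mat n) : fipE A B = fipE B A := by
  simp [fipE, mul_comm]

lemma fipE_self_nonneg (A : Mat n) : 0 ≤ fipE A A :=
  Finset.sum_nonneg fun _ _ => Finset.sum_nonneg fun _ _ => mul_self_nonneg _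

lemma fipE_add_self (A B : Mat n) :
    fipE (A + B) (A + B) = fipE A A + 2 * fipE A B + fipE B B := by
  rw [fipE_add_left, fipE_comm A, fipE_comm B, fipE_add_left, fipE_add_left, fipE_comm B A]
  ring

lemma fipE_brkt_left (hW : skewM W) (A B : Mat n) : fipE (brkt W A) B = -fipE A (brkt W B) := by
  have hWt : (Matrix.of W).transpose = -Matrix.of W := Matrix.ext hW
  simp only [fipE_eq_trace, of_brkt, Matrix.transpose_sub, Matrix.transpose_mul, hWt,
    Matrix.mul_sub, Matrix.sub_mul, Matrix.trace_sub, neg_mul, mul_neg, Matrix.trace_neg]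
  rw [Matrix.mul_assoc (Matrix.of W), Matrix.trace_mul_comm (Matrix.of W), Matrix.mul_assoc,
    Matrix.mul_assoc]
  ring

lemma fipE_brkt_self (hW : skewM W) (A : Mat n) : fipE (brkt W A) A = 0 :=
  self_eq_neg.1 <| (fipE_brkt_left hW A A).trans (congrArg _ (fipE_comm _ _))

lemma tnormSq_nonneg (u : Fin n → Mat n) : 0 ≤ tnormSq u :=
  Finset.sum_nonneg fun _ _ => fipE_self_nonneg _

lemma sq_sum_fipE_le (u v : Fin n → Mat n) :
    (∑ j, fipE (u j) (v j)) ^ 2 ≤ tnormSq u * tnormSq v := by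
  have h := Finset.sum_mul_sq_le_sq_mul_sq (Finset.univ : Finset (Fin n × Fin n × Fin n))
    (fun q => u q.1 q.2.1 q.2.2) (fun q => v q.1 q.2.1 q.2.2)
  simpa only [Fintype.sum_prod_type, tnormSq, fipE, pow_two] using h

lemma abs_apply_le_sqrt_tnormSq (u : Fin n → Mat n) (j μ ν : Fin n) :
    |u j μ ν| ≤ Real.sqrt (tnormSq u) := by
  apply Real.abs_le_sqrt
  calc u j μ ν ^ 2 ≤ ∑ q : Fin n × Fin n × Fin n, u q.1 q.2.1 q.2.2 ^ 2 :=
        Finset.single_le_sum (f := fun q : Fin n × Fin n × Fin n => u q.1 q.2.1 q.2.2 ^ 2)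
          (fun _ _ => sq_nonneg _) (Finset.mem_univ (j, μ, ν))
    _ = tnormSq u := by simp only [Fintype.sum_prod_type, tnormSq, fipE, pow_two]

lemma abs_fipE_le (hA : ∀ μ ν, |A μ ν| ≤ a) (hB : ∀ μ ν, |B μ ν| ≤ b) :
    |fipE A B| ≤ n ^ 2 * (a * b) := by
  calc |fipE A B| ≤ ∑ μ, ∑ ν, |A μ ν * B μ ν| :=
        (Finset.abs_sum_le_sum_abs _ _).trans
          (Finset.sum_le_sum fun _ _ => Finset.abs_sum_le_sum_abs _ _)
    _ ≤ ∑ _μ : Fin n, ∑ _ν : Fin n, a * b := by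
        refine Finset.sum_le_sum fun μ _ => Finset.sum_le_sum fun ν _ => ?_
        rw [abs_mul]
        exact mul_le_mul (hA μ ν) (hB μ ν) (abs_nonneg _) ((abs_nonneg _).trans (hA μ ν))
    _ = n ^ 2 * (a * b) := by
        simp only [Finset.sum_const, Finset.card_univ, Fintype.card_fin, nsmul_eq_mul]
        ring

lemma abs_brkt_le (hA : ∀ μ ν, |A μ ν| ≤ a) (hB : ∀ μ ν, |B μ ν| ≤ b) (μ ν : Fin n) :
    |brkt A B μ ν| ≤ 2 * n * (a * b) := by
  have ha : 0 ≤ a := (abs_nonneg _).trans (hA μ ν)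
  have hb : 0 ≤ b := (abs_nonneg _).trans (hB μ ν)
  calc |brkt A B μ ν| ≤ ∑ k, |A μ k * B k ν - B μ k * A k ν| := Finset.abs_sum_le_sum_abs _ _
    _ ≤ ∑ _k : Fin n, (a * b + b * a) := by
        refine Finset.sum_le_sum fun k _ => (abs_sub _ _).trans ?_
        rw [abs_mul, abs_mul]
        exact add_le_add (mul_le_mul (hA μ k) (hB k ν) (abs_nonneg _) ha)
          (mul_le_mul (hB μ k) (hA k ν) (abs_nonneg _) hb)
    _ = 2 * n * (a * b) := by
        simp only [Finset.sum_const, Finset.card_univ, Fintype.card_fin, nsmul_eq_mul]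
        ring

lemma sum_fipE_brkt_le {F : Fin n → Fin n → Mat n} (hF : ∀ i j μ ν, |F i j μ ν| ≤ K) :
    ∑ j, ∑ i, fipE (brkt (u i) (F i j)) (u j) ≤ 2 * n ^ 5 * K * tnormSq u := by
  set r := Real.sqrt (tnormSq u)
  have hu (j μ ν : Fin n) : |u j μ ν| ≤ r := abs_apply_le_sqrt_tnormSq u j μ ν
  calc ∑ j, ∑ i, fipE (brkt (u i) (F i j)) (u j)
      ≤ ∑ _j : Fin n, ∑ _i : Fin n, n ^ 2 * (2 * n * (r * K) * r) :=
        Finset.sum_le_sum fun j _ => Finset.sum_le_sum fun i _ =>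
          (le_abs_self _).trans (abs_fipE_le (abs_brkt_le (hu i) (hF i j)) (hu j))
    _ = 2 * n ^ 5 * K * r ^ 2 := by
        simp only [Finset.sum_const, Finset.card_univ, Fintype.card_fin, nsmul_eq_mul]
        ring
    _ = 2 * n ^ 5 * K * tnormSq u := by rw [Real.sq_sqrt (tnormSq_nonneg u)]

end Matrices

section Bochner

variable {V : En n → ℝ} {A : En n → Mat n} {u : En n → Fin n → Mat n} {W : Fin n → En n → Mat n}
  {F : Fin n → Fin n → En n → Mat n} {y : En n} {K : ℝ}

lemma pder_fipE_self (hA : DifferentiableAt ℝ A y) (i : Fin n) :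
    pder i (fun z => fipE (A z) (A z)) y = 2 * fipE (pderM i A y) (A y) := by
  have hA' (μ ν : Fin n) : DifferentiableAt ℝ (fun z => A z μ ν) y :=
    differentiableAt_pi.1 (differentiableAt_pi.1 hA μ) ν
  have hrow (μ : Fin n) : DifferentiableAt ℝ (fun z => ∑ ν, A z μ ν * A z μ ν) y :=
    .fun_sum fun ν _ => (hA' μ ν).fun_mul (hA' μ ν)
  simp only [fipE, Finset.mul_sum]
  rw [pder_sum fun μ _ => hrow μ]
  refine Finset.sum_congr rfl fun μ _ => ?_
  rw [pder_sum fun ν _ => (hA' μ ν).fun_mul (hA' μ ν)]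
  refine Finset.sum_congr rfl fun ν _ => ?_
  rw [pder_mul (hA' μ ν) (hA' μ ν), pderM]
  ring

lemma driftLap_fipE_self (hA : ContDiff ℝ 2 A) :
    driftLap V (fun z => fipE (A z) (A z)) y =
      2 * fipE (fun μ ν => driftLap V (fun z => A z μ ν) y) (A y)
        + 2 * ∑ i, fipE (pderM i A y) (pderM i A y) := by
  have hA' (μ ν : Fin n) : ContDiff ℝ 2 fun z => A z μ ν := contDiff_pi.1 (contDiff_pi.1 hA μ) ν
  have hrow (μ : Fin n) : ContDiff ℝ 2 fun z => ∑ ν, A z μ ν * A z μ ν :=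
    .sum fun ν _ => (hA' μ ν).mul (hA' μ ν)
  have grad : ∑ i, fipE (pderM i A y) (pderM i A y) =
      ∑ μ, ∑ ν, gradInner (fun z => A z μ ν) (fun z => A z μ ν) y := by
    simp only [fipE, gradInner, pderM]
    rw [Finset.sum_comm]
    exact Finset.sum_congr rfl fun μ _ => Finset.sum_comm
  rw [grad]
  simp only [fipE, Finset.mul_sum, ← Finset.sum_add_distrib]
  rw [driftLap_sum fun μ _ => hrow μ]
  refine Finset.sum_congr rfl fun μ _ => ?_
  rw [driftLap_sum fun ν _ => (hA' μ ν).mul (hA' μ ν)]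
  refine Finset.sum_congr rfl fun ν _ => ?_
  rw [driftLap_mul (hA' μ ν) (hA' μ ν)]
  ring

/-- The operator `Lop` for an arbitrary connection `W` and an arbitrary `F` in place of its
curvature. -/
def linearizedOp (W : Fin n → En n → Mat n) (F : Fin n → Fin n → En n → Mat n)
    (u : En n → Fin n → Mat n) (y : En n) (j : Fin n) : Mat n :=
  lapM (fun z => u z j) y
    - (1 / 2 : ℝ) • (∑ i, y i • pderM i (fun z => u z j) y)
    - (1 / 2 : ℝ) • u y j
    + (2 : ℝ) • ∑ i, brkt (W i y) (pderM i (fun z => u z j) y)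
    + ∑ i, brkt (W i y) (brkt (W i y) (u y j))
    + (2 : ℝ) • ∑ i, brkt (u y i) (F i j y)

/-- The covariant derivative `D_i u = ∂_i u + [W_i, u]` of a tuple of matrix fields, taken in each
component. -/
def covDeriv (W : Fin n → En n → Mat n) (i : Fin n) (u : En n → Fin n → Mat n) (y : En n)
    (j : Fin n) : Mat n :=
  pderM i (fun z => u z j) y + brkt (W i y) (u y j)

lemma contDiff_tnormSq {k : WithTop ℕ∞} (hu : ContDiff ℝ k u) :
    ContDiff ℝ k fun y => tnormSq (u y) := by
  have hu' (j μ ν : Fin n) : ContDiff ℝ k fun y => u y j μ ν :=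
    contDiff_pi.1 (contDiff_pi.1 (contDiff_pi.1 hu j) μ) ν
  exact .sum fun j _ => .sum fun μ _ => .sum fun ν _ => (hu' j μ ν).mul (hu' j μ ν)

lemma pder_tnormSq (hW : ∀ i, skewM (W i y)) (hu : DifferentiableAt ℝ u y) (i : Fin n) :
    pder i (fun z => tnormSq (u z)) y = 2 * ∑ j, fipE (covDeriv W i u y j) (u y j) := by
  have hu' (j : Fin n) : DifferentiableAt ℝ (fun z => u z j) y := differentiableAt_pi.1 hu j
  have hf (j : Fin n) : DifferentiableAt ℝ (fun z => fipE (u z j) (u z j)) y := by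
    simp only [fipE]
    fun_prop
  simp only [tnormSq, covDeriv]
  rw [pder_sum fun j _ => hf j, Finset.mul_sum]
  refine Finset.sum_congr rfl fun j _ => ?_
  rw [pder_fipE_self (hu' j), fipE_add_left, fipE_brkt_self (hW i), add_zero]

lemma gradInner_tnormSq_le (hW : ∀ i, skewM (W i y)) (hu : DifferentiableAt ℝ u y) :
    gradInner (fun z => tnormSq (u z)) (fun z => tnormSq (u z)) y ≤
      4 * tnormSq (u y) * ∑ i, tnormSq (covDeriv W i u y) := by
  rw [gradInner, Finset.mul_sum]
  refine Finset.sum_le_sum fun i _ => ?_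
  rw [pder_tnormSq hW hu]
  linarith [sq_sum_fipE_le (covDeriv W i u y) (u y)]

lemma fipE_linearizedOp (hW : ∀ i, skewM (W i y)) (j : Fin n) :
    fipE (linearizedOp W F u y j) (u y j) =
      fipE (fun μ ν => driftLap gaussPot (fun z => u z j μ ν) y) (u y j)
        - 1 / 2 * fipE (u y j) (u y j)
        - ∑ i, (2 * fipE (pderM i (fun z => u z j) y) (brkt (W i y) (u y j))
          + fipE (brkt (W i y) (u y j)) (brkt (W i y) (u y j)))
        + 2 * ∑ i, fipE (brkt (u y i) (F i j y)) (u y j) := by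
  have drift : lapM (fun z => u z j) y - (1 / 2 : ℝ) • (∑ i, y i • pderM i (fun z => u z j) y) =
      fun μ ν => driftLap gaussPot (fun z => u z j μ ν) y := by
    ext μ ν
    simp [driftLap_gaussPot, lapM, pderM, Finset.sum_apply]
  rw [linearizedOp, drift]
  simp only [fipE_add_left, fipE_sub_left, fipE_smul_left, fipE_sum_left, fipE_brkt_left (hW _),
    Finset.sum_neg_distrib, Finset.sum_add_distrib, ← Finset.mul_sum]
  ring

theorem driftLap_tnormSq (hW : ∀ i, skewM (W i y)) (hu : ContDiff ℝ 2 u) :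
    driftLap gaussPot (fun z => tnormSq (u z)) y =
      2 * ∑ j, fipE (linearizedOp W F u y j) (u y j) + tnormSq (u y)
        + 2 * ∑ i, tnormSq (covDeriv W i u y)
        - 4 * ∑ j, ∑ i, fipE (brkt (u y i) (F i j y)) (u y j) := by
  have hu' (j : Fin n) : ContDiff ℝ 2 fun z => u z j := contDiff_pi.1 hu j
  have hf (j : Fin n) : ContDiff ℝ 2 fun z => fipE (u z j) (u z j) := by
    simp only [fipE]
    fun_prop
  have component (j : Fin n) : driftLap gaussPot (fun z => fipE (u z j) (u z j)) y =
      2 * fipE (linearizedOp W F u y j) (u y j) + fipE (u y j) (u y j)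
        + 2 * ∑ i, fipE (covDeriv W i u y j) (covDeriv W i u y j)
        - 4 * ∑ i, fipE (brkt (u y i) (F i j y)) (u y j) := by
    rw [driftLap_fipE_self (hu' j), fipE_linearizedOp hW]
    simp only [covDeriv, fipE_add_self, Finset.sum_add_distrib]
    ring
  simp only [tnormSq]
  rw [driftLap_sum fun j _ => hf j, Finset.sum_comm (s := Finset.univ (α := Fin n))
    (f := fun i j => fipE (covDeriv W i u y j) (covDeriv W i u y j))]
  simp only [component, Finset.sum_sub_distrib, Finset.sum_add_distrib, Finset.mul_sum]

lemma gradInner_sub_le_tnormSq_mul_driftLap {lam : ℝ} (hW : ∀ i, skewM (W i y))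
    (hF : ∀ i j μ ν, |F i j y μ ν| ≤ K) (hu : ContDiff ℝ 2 u)
    (heig : ∀ j, linearizedOp W F u y j = (-lam) • u y j) :
    1 / 2 * gradInner (fun z => tnormSq (u z)) (fun z => tnormSq (u z)) y
        - (2 * lam - 1 + 8 * n ^ 5 * K) * tnormSq (u y) ^ 2 ≤
      tnormSq (u y) * driftLap gaussPot (fun z => tnormSq (u z)) y := by
  have kato := gradInner_tnormSq_le hW (hu.differentiable two_ne_zero y)
  have curvature := mul_le_mul_of_nonneg_left (sum_fipE_brkt_le (u := u y) hF)
    (tnormSq_nonneg (u y))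
  have eigen : ∑ j, fipE (linearizedOp W F u y j) (u y j) = -lam * tnormSq (u y) := by
    simp only [heig, fipE_smul_left, tnormSq, Finset.mul_sum]
  rw [driftLap_tnormSq (F := F) hW hu, eigen]
  linarith

end Bochner

section Soliton

variable {y : En n}

lemma skewM_Wc (i : Fin n) (y : En n) : skewM (Wc i y) := by
  intro μ ν
  simp only [Wc, sigmaM]
  ring

lemma aC_pos (hn : 5 ≤ n) : 0 < aC n := by
  have h5 : (5 : ℝ) ≤ n := by exact_mod_cast hn
  have : 0 < Real.sqrt ((n : ℝ) - 2) := Real.sqrt_pos.2 (by linarith)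
  unfold aC
  positivity

lemma bC_pos (hn : 5 ≤ n) (hn' : n ≤ 9) : 0 < bC n := by
  have h5 : (5 : ℝ) ≤ n := by exact_mod_cast hn
  have h9 : (n : ℝ) ≤ 9 := by exact_mod_cast hn'
  have discriminant : ((n : ℝ) + 2) ^ 2 < 18 * (n - 2) := by nlinarith
  have sqrt_lt : Real.sqrt (2 * (n : ℝ) - 4) < (6 * n - 12) / (n + 2) := by
    rw [Real.sqrt_lt' (div_pos (by linarith) (by linarith)), div_pow, lt_div_iff₀ (by positivity)]
    nlinarith
  rw [lt_div_iff₀ (by positivity)] at sqrt_lt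
  unfold bC
  linarith

lemma exists_continuousLinearMap_eq_sigmaM (i μ ν : Fin n) :
    ∃ L : En n →L[ℝ] ℝ, (fun z => sigmaM i z μ ν) = L :=
  ⟨(if i = ν then EuclideanSpace.proj μ else 0) - (if i = μ then EuclideanSpace.proj ν else 0), by
    ext z
    simp only [sigmaM]
    split_ifs <;> simp⟩

lemma abs_sigmaM_le (i : Fin n) (y : En n) (μ ν : Fin n) : |sigmaM i y μ ν| ≤ 2 * ‖y‖ := by
  have coord (P : Prop) [Decidable P] (k : Fin n) : |if P then y k else 0| ≤ ‖y‖ := by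
    split_ifs
    · exact PiLp.norm_apply_le y k
    · simp
  calc |sigmaM i y μ ν| ≤ ‖y‖ + ‖y‖ :=
        (abs_sub _ _).trans (add_le_add (coord (i = ν) μ) (coord (i = μ) ν))
    _ = 2 * ‖y‖ := (two_mul _).symm

lemma abs_Wc_le (hq : 0 ≤ aC n * ‖y‖ ^ 2 + bC n) (i μ ν : Fin n) :
    |Wc i y μ ν| ≤ 2 * ‖y‖ * (aC n * ‖y‖ ^ 2 + bC n)⁻¹ := by
  rw [Wc, div_eq_mul_inv, abs_mul, abs_of_nonneg (inv_nonneg.2 hq)]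
  exact mul_le_mul_of_nonneg_right (abs_sigmaM_le i y μ ν) (inv_nonneg.2 hq)

lemma pderM_Wc (hq : aC n * ‖y‖ ^ 2 + bC n ≠ 0) (k i μ ν : Fin n) :
    pderM k (Wc i) y μ ν =
      sigmaM i (EuclideanSpace.single k 1) μ ν * (aC n * ‖y‖ ^ 2 + bC n)⁻¹
        - sigmaM i y μ ν * (2 * aC n * y k) * (aC n * ‖y‖ ^ 2 + bC n)⁻¹ ^ 2 := by
  obtain ⟨L, hL⟩ := exists_continuousLinearMap_eq_sigmaM i μ ν
  have hL' (z : En n) : sigmaM i z μ ν = L z := congrFun hL z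
  have hsq : DifferentiableAt ℝ (fun z : En n => ‖z‖ ^ 2) y :=
    (contDiff_norm_sq ℝ (n := 1)).differentiable one_ne_zero y
  have hinv : HasDerivAt (fun t => (aC n * t + bC n)⁻¹)
      (-(aC n * (aC n * ‖y‖ ^ 2 + bC n)⁻¹ ^ 2)) (‖y‖ ^ 2) := by
    refine ((((hasDerivAt_id _).const_mul (aC n)).add_const (bC n)).fun_inv hq).congr_deriv ?_
    simp only [id, inv_pow]
    ring
  have hdiff : DifferentiableAt ℝ (fun z : En n => (aC n * ‖z‖ ^ 2 + bC n)⁻¹) y :=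
    ((hsq.const_mul _).add_const _).inv hq
  simp only [pderM, Wc, div_eq_mul_inv, hL']
  rw [pder_mul L.differentiableAt hdiff, pder_comp hinv hsq, pder_norm_sq,
    pder_continuousLinearMap]
  ring

lemma abs_pderM_Wc_le (ha : 0 ≤ aC n) (hb : 0 < bC n) (k i μ ν : Fin n) :
    |pderM k (Wc i) y μ ν| ≤ 6 * (aC n * ‖y‖ ^ 2 + bC n)⁻¹ := by
  have hq : 0 < aC n * ‖y‖ ^ 2 + bC n := by positivity
  have hcancel : aC n * ‖y‖ ^ 2 * (aC n * ‖y‖ ^ 2 + bC n)⁻¹ ≤ 1 :=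
    mul_inv_le_one_of_le₀ (by linarith) hq.le
  rw [pderM_Wc hq.ne']
  set q := (aC n * ‖y‖ ^ 2 + bC n)⁻¹
  have hq0 : 0 ≤ q := inv_nonneg.2 hq.le
  have hσ : |sigmaM i (EuclideanSpace.single k 1) μ ν| ≤ 2 := by
    simpa using abs_sigmaM_le i (EuclideanSpace.single k (1 : ℝ)) μ ν
  calc |sigmaM i (EuclideanSpace.single k 1) μ ν * q - sigmaM i y μ ν * (2 * aC n * y k) * q ^ 2|
      ≤ |sigmaM i (EuclideanSpace.single k 1) μ ν| * q
          + |sigmaM i y μ ν| * (2 * aC n * |y k|) * q ^ 2 := by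
        refine (abs_sub _ _).trans_eq ?_
        simp only [abs_mul, abs_two, abs_of_nonneg ha, abs_of_nonneg hq0, abs_pow]
    _ ≤ 2 * q + 2 * ‖y‖ * (2 * aC n * ‖y‖) * q ^ 2 := by
        gcongr
        · exact abs_sigmaM_le i y μ ν
        · exact PiLp.norm_apply_le y k
    _ = 2 * q + 4 * (aC n * ‖y‖ ^ 2 * q) * q := by ring
    _ ≤ 2 * q + 4 * 1 * q := by gcongr
    _ = 6 * q := by ring

lemma exists_abs_Fc_le (ha : 0 < aC n) (hb : 0 < bC n) :
    ∃ c, ∀ (i j : Fin n) (y : En n) (μ ν : Fin n), |Fc i j y μ ν| ≤ c * (1 + ‖y‖ ^ 2)⁻¹ := by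
  refine ⟨(12 + 8 * n / aC n) * (min (aC n) (bC n))⁻¹, fun i j y μ ν => ?_⟩
  have hq : 0 < aC n * ‖y‖ ^ 2 + bC n := by positivity
  have hcancel : aC n * ‖y‖ ^ 2 * (aC n * ‖y‖ ^ 2 + bC n)⁻¹ ≤ 1 :=
    mul_inv_le_one_of_le₀ (by linarith) hq.le
  have hmin : min (aC n) (bC n) * (1 + ‖y‖ ^ 2) ≤ aC n * ‖y‖ ^ 2 + bC n := by
    have := mul_le_mul_of_nonneg_right (min_le_left (aC n) (bC n)) (sq_nonneg ‖y‖)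
    linarith [min_le_right (aC n) (bC n)]
  have hdecay : (aC n * ‖y‖ ^ 2 + bC n)⁻¹ ≤ (min (aC n) (bC n))⁻¹ * (1 + ‖y‖ ^ 2)⁻¹ := by
    rw [← mul_inv]
    exact inv_anti₀ (mul_pos (lt_min ha hb) (by positivity)) hmin
  have hWW := abs_brkt_le (abs_Wc_le hq.le i) (abs_Wc_le hq.le j) μ ν
  have hdW := abs_pderM_Wc_le (y := y) ha.le hb
  set q := (aC n * ‖y‖ ^ 2 + bC n)⁻¹
  have : 0 ≤ q := inv_nonneg.2 hq.le
  calc |Fc i j y μ ν|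
      ≤ |pderM i (Wc j) y μ ν| + |pderM j (Wc i) y μ ν| + |brkt (Wc i y) (Wc j y) μ ν| :=
        (abs_add_le _ _).trans (add_le_add_left (abs_sub _ _) _)
    _ ≤ 6 * q + 6 * q + 2 * n * (2 * ‖y‖ * q * (2 * ‖y‖ * q)) :=
        add_le_add (add_le_add (hdW ..) (hdW ..)) hWW
    _ = (12 + 8 * n / aC n * (aC n * ‖y‖ ^ 2 * q)) * q := by
        field_simp
        ring
    _ ≤ (12 + 8 * n / aC n * 1) * ((min (aC n) (bC n))⁻¹ * (1 + ‖y‖ ^ 2)⁻¹) := by gcongr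
    _ = (12 + 8 * n / aC n) * (min (aC n) (bC n))⁻¹ * (1 + ‖y‖ ^ 2)⁻¹ := by ring

end Soliton

section Growth

variable {ξ : En n → Fin n → Mat n} {lam : ℝ}

lemma one_add_sq_rpow_le {r : ℝ} (hr : 0 ≤ r) (α : ℝ) :
    (1 + r ^ 2) ^ α ≤ 2 ^ |α| * (max 1 r ^ α) ^ 2 := by
  set m := max 1 r
  have hm : 1 ≤ m := le_max_left 1 r
  have hrm : r ^ 2 ≤ m ^ 2 := pow_le_pow_left₀ hr (le_max_right 1 r) 2
  have one_le : 1 ≤ (1 + r ^ 2) / m ^ 2 := by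
    rw [one_le_div₀ (by positivity)]
    rcases max_choice 1 r with h | h <;> simp only [m, h] <;> nlinarith
  have le_two : (1 + r ^ 2) / m ^ 2 ≤ 2 := by
    rw [div_le_iff₀ (by positivity)]
    nlinarith
  calc (1 + r ^ 2) ^ α = ((1 + r ^ 2) / m ^ 2) ^ α * (m ^ α) ^ 2 := by
        rw [sq (m ^ α), ← Real.mul_rpow (by positivity) (by positivity), ← sq,
          ← Real.mul_rpow (by positivity) (by positivity), div_mul_cancel₀ _ (by positivity)]
    _ ≤ 2 ^ |α| * (m ^ α) ^ 2 := by
        gcongr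
        exact (Real.rpow_le_rpow_of_exponent_le one_le (le_abs_self α)).trans
          (Real.rpow_le_rpow (by positivity) le_two (abs_nonneg α))

lemma integrable_tnormSq_mul_gauss (hξ : Continuous ξ)
    (hint : Integrable fun y => (tnormSq (ξ y) +
      ∑ i, ∑ j, fipE (pderM i (fun z => ξ z j) y) (pderM i (fun z => ξ z j) y)) * gauss y) :
    Integrable fun y => tnormSq (ξ y) * gauss y := by
  have hcont : Continuous fun y => tnormSq (ξ y) * gauss y := by
    unfold tnormSq fipE gauss
    fun_prop
  refine hint.mono' hcont.aestronglyMeasurable (.of_forall fun y => ?_)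
  have hgauss : 0 ≤ gauss y := (Real.exp_pos _).le
  rw [Real.norm_of_nonneg (mul_nonneg (tnormSq_nonneg _) hgauss)]
  refine mul_le_mul_of_nonneg_right (le_add_of_nonneg_right ?_) hgauss
  exact Finset.sum_nonneg fun _ _ => tnormSq_nonneg _

theorem eigenfunction_growth_bound_general {W : Fin n → En n → Mat n}
    {F : Fin n → Fin n → En n → Mat n} {c : ℝ} (hW : ∀ i y, skewM (W i y))
    (hF : ∀ i j y μ ν, |F i j y μ ν| ≤ c * (1 + ‖y‖ ^ 2)⁻¹) (hξ : ContDiff ℝ 2 ξ)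
    (heig : ∀ y j, linearizedOp W F ξ y j = (-lam) • ξ y j)
    (hint : Integrable fun y => tnormSq (ξ y) * gauss y) :
    ∃ C : ℝ, ∀ y, Real.sqrt (tnormSq (ξ y)) ≤ C * (max 1 ‖y‖) ^ (2 * lam - 1) := by
  have hsub (y : En n) := gradInner_sub_le_tnormSq_mul_driftLap (hW · y) (hF · · y) hξ (heig y)
  simp only [← mul_assoc] at hsub
  obtain ⟨M, hM, hgrowth⟩ := exists_le_mul_one_add_norm_sq_rpow (contDiff_tnormSq hξ) hint hsub
  refine ⟨Real.sqrt (M * 2 ^ |2 * lam - 1|), fun y => Real.sqrt_le_iff.2 ⟨by positivity, ?_⟩⟩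
  calc tnormSq (ξ y) ≤ M * (1 + ‖y‖ ^ 2) ^ (2 * lam - 1) := hgrowth y
    _ ≤ M * (2 ^ |2 * lam - 1| * (max 1 ‖y‖ ^ (2 * lam - 1)) ^ 2) := by
        gcongr
        exact one_add_sq_rpow_le (norm_nonneg y) _
    _ = (Real.sqrt (M * 2 ^ |2 * lam - 1|) * max 1 ‖y‖ ^ (2 * lam - 1)) ^ 2 := by
        rw [mul_pow, Real.sq_sqrt (by positivity), mul_assoc]

end Growth

end

open MeasureTheory in
/-- Growth bound for eigenfunctions of the linearized operator: if `ξ` is smooth, skew-valued,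
satisfies `−Lξ = λξ` pointwise, and is in the Gaussian-weighted `H¹` space, then
`‖ξ(y)‖_F ≤ C·(max(1,|y|))^{2λ−1}` for some constant `C`. -/
theorem eigenfunction_growth_bound (n : ℕ) (hn : 5 ≤ n) (hn' : n ≤ 9)
    (lam : ℝ) (ξ : En n → Fin n → Mat n)
    (hs : ContDiff ℝ (⊤ : ℕ∞) ξ) (hskew : ∀ y j, skewM (ξ y j))
    (heig : ∀ (y : En n) (j : Fin n), Lop ξ y j = (-lam) • ξ y j)
    (hint : Integrable (fun y : En n =>
      (tnormSq (ξ y) +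
        ∑ i, ∑ j, fipE (pderM i (fun z => ξ z j) y) (pderM i (fun z => ξ z j) y)) * gauss y)) :
    ∃ C : ℝ, ∀ y : En n,
      Real.sqrt (tnormSq (ξ y)) ≤ C * (max 1 ‖y‖) ^ (2 * lam - 1) := by
  obtain ⟨c, hc⟩ := exists_abs_Fc_le (aC_pos hn) (bC_pos hn hn')
  exact eigenfunction_growth_bound_general skewM_Wc hc (contDiff_infty.1 hs 2) heig
    (integrable_tnormSq_mul_gauss hs.continuous hint)
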